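/- Let n ∈ ℕ and let M be a nonempty type equipped with a binary relation le, a binary operation max : M → M → M, unary operations s, f : M → M, and elements c_0, …, c_n ∈ M, satisfying (C1) le a a for all a, (C2) for all a, b, g, le (max a b) g implies le a g, (C3) for all a, b, g, le (max a b) g implies le b g, and, for a fixed i with 0 ≤ i ≤ n, (C4_i) for all α, β, it is not the case that f(β) = c_i, f(α) = c_i, and le (s β) α all hold. Then for every k ∈ ℕ and every sequence x : ℕ → M, it is not the case that both f(x(k+1)) = c_i and f(m(k, x, s(x(k+1)))) = c_i. -/

import Mathlib

/-- The iterated max term `m(k, x, t)`: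
`m(0, x, t) = t` and `m(k+1, x, t) = m(k, x, max(s(x(k+1)), t))`. -/
def iterMax {M : Type*} (mx : M → M → M) (s : M → M) : ℕ → (ℕ → M) → M → M
  | 0, _, t => t
  | k + 1, x, t => iterMax mx s k x (mx (s (x (k + 1))) t)

/-- Every `t` lies below `m(k, x, t)`. Neither transitivity nor monotonicity of `max` is
available, so the induction on `k` generalizes `t`: the step takes `max (s (x (k + 1))) t` for it
and discards the left argument by `C3`. -/
theorem le_iterMax {M : Type*} (le : M → M → Prop) (mx : M → M → M) (s : M → M)
    (C1 : ∀ a : M, le a a) (C3 : ∀ a b g : M, le (mx a b) g → le b g)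
    (x : ℕ → M) (k : ℕ) (t : M) : le t (iterMax mx s k x t) := by
  induction k generalizing t with
  | zero => exact C1 t
  | succ k ih => exact C3 _ _ _ (ih _)

theorem stmt6 (n : ℕ) (M : Type*) [Nonempty M] (le : M → M → Prop)
    (mx : M → M → M) (s f : M → M) (c : ℕ → M)
    (C1 : ∀ a : M, le a a)
    (C2 : ∀ a b g : M, le (mx a b) g → le a g)
    (C3 : ∀ a b g : M, le (mx a b) g → le b g)
    (i : ℕ) (hi : i ≤ n)
    (C4 : ∀ α β : M, ¬ (f β = c i ∧ f α = c i ∧ le (s β) α)) :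
    ∀ (k : ℕ) (x : ℕ → M),
      ¬ (f (x (k + 1)) = c i ∧
          f (iterMax mx s k x (s (x (k + 1)))) = c i) := by
  rintro k x ⟨hx, hm⟩
  exact C4 _ _ ⟨hx, hm, le_iterMax le mx s C1 C3 x k _⟩
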